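/- On the reference triangle, the normal traces of the edge basis functions on the bottom edge form an L²-orthogonal family: there exist positive reals c_i such that for all 0 ≤ i, j, ∫_{−1}^{1} (φ_i · n)(x,0) (φ_j · n)(x,0) dx = c_i δ_{ij}, where n = (0,−1) is the outer unit normal of the bottom edge. -/

import Mathlib

open MeasureTheory

/-- Jacobi polynomial with parameters `(α, 0)`, via the Rodrigues formula. -/
noncomputable def jacobiP (α : ℝ) (n : ℕ) (x : ℝ) : ℝ :=
  1 / (2 ^ n * (n.factorial : ℝ) * (1 - x) ^ α) *
    iteratedDeriv n (fun t : ℝ => (1 - t) ^ α * (t ^ 2 - 1) ^ n) x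

/-- Integrated Jacobi polynomial `p̂_n^α`. -/
noncomputable def jacobiPhat (α : ℝ) (n : ℕ) (x : ℝ) : ℝ :=
  if n = 0 then 1 else ∫ ξ in (-1 : ℝ)..x, jacobiP α (n - 1) ξ

/-- Two-dimensional curl of a scalar field: `curl ψ = (∂_y ψ, -∂_x ψ)`. -/
noncomputable def curl2 (ψ : ℝ × ℝ → ℝ) (p : ℝ × ℝ) : ℝ × ℝ :=
  (deriv (fun y => ψ (p.1, y)) p.2, -deriv (fun x => ψ (x, p.2)) p.1)

/-- Barycentric coordinate `λ₁ = (1 - x - y)/2` on the reference triangle. -/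
noncomputable def lam1 (p : ℝ × ℝ) : ℝ := (1 - p.1 - p.2) / 2

/-- Barycentric coordinate `λ₂ = (1 + x - y)/2` on the reference triangle. -/
noncomputable def lam2 (p : ℝ × ℝ) : ℝ := (1 + p.1 - p.2) / 2

/-- Edge basis functions for the bottom edge of the reference triangle:
`φ₀` is the lowest-order Raviart–Thomas edge function, and for `i ≥ 1`,
`φ_i = curl (p̂_{i+1}^0(x/(1-y)) (1-y)^{i+1})`. -/
noncomputable def phiEdge : ℕ → ℝ × ℝ → ℝ × ℝ
  | 0 => fun p => lam2 p • curl2 lam1 p - lam1 p • curl2 lam2 p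
  | (i + 1) => curl2 fun q => jacobiPhat 0 (i + 2) (q.1 / (1 - q.2)) * (1 - q.2) ^ (i + 2)

/-- Euclidean dot product on `ℝ × ℝ`. -/
noncomputable def dot2 (a b : ℝ × ℝ) : ℝ := a.1 * b.1 + a.2 * b.2

/-!
On the bottom edge the normal trace of `curl ψ` is the tangential derivative of `ψ`, so it undoes
the integration in `p̂_{i+1}^0` and leaves the Legendre polynomial `P_i`; the trace of `φ₀` is a
nonzero constant. By Rodrigues' formula `P_i` is a multiple of the `i`-th derivative of
`(x² - 1)^i`, a polynomial vanishing to order `i` at both endpoints. Integrating by parts `i` times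
therefore moves all derivatives onto the other factor without boundary terms, and kills it when
its degree is below `i`.
-/

open Polynomial

lemma iterate_derivative_ne_zero_of_le_natDegree {R : Type*} [Semiring R]
    [IsAddTorsionFree R] {p : R[X]} (hp : p ≠ 0) {n : ℕ} (hn : n ≤ p.natDegree) :
    derivative^[n] p ≠ 0 := by
  induction n generalizing p with
  | zero => exact hp
  | succ n ih =>
    rw [Function.iterate_succ_apply]
    refine ih (derivative_ne_zero.mpr (by lia)) ?_
    rw [natDegree_derivative]
    lia

lemma iteratedDeriv_eval {𝕜 : Type*} [NontriviallyNormedField 𝕜] (p : 𝕜[X]) (n : ℕ) :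
    iteratedDeriv n (fun x ↦ p.eval x) = fun x ↦ (derivative^[n] p).eval x := by
  induction n with
  | zero => simp
  | succ n ih =>
    funext x
    rw [iteratedDeriv_succ, ih, Function.iterate_succ_apply', Polynomial.deriv]

lemma integral_eval_mul_self_pos {a b : ℝ} (hab : a < b) {q : ℝ[X]} (hq : q ≠ 0) :
    0 < ∫ x in a..b, q.eval x * q.eval x := by
  obtain ⟨c, hc, hqc⟩ : ∃ c ∈ Set.Icc a b, q.eval c ≠ 0 := by
    by_contra! hzero
    exact hq (q.eq_zero_of_infinite_isRoot ((Set.Icc_infinite hab).mono hzero))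
  exact intervalIntegral.integral_pos hab (by fun_prop) (fun x _ ↦ mul_self_nonneg _)
    ⟨c, hc, mul_self_pos.mpr hqc⟩

lemma integral_eval_mul_eval_derivative {a b : ℝ} (q : ℝ[X]) {p : ℝ[X]}
    (ha : p.IsRoot a) (hb : p.IsRoot b) :
    ∫ x in a..b, q.eval x * (derivative p).eval x =
      -∫ x in a..b, (derivative q).eval x * p.eval x := by
  rw [intervalIntegral.integral_mul_deriv_eq_deriv_mul
    (fun x _ ↦ q.hasDerivAt x) (fun x _ ↦ p.hasDerivAt x)
    ((Polynomial.continuous _).intervalIntegrable _ _)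
    ((Polynomial.continuous _).intervalIntegrable _ _), ha.eq_zero, hb.eq_zero]
  simp only [mul_zero, sub_zero, zero_sub]

lemma integral_eval_mul_eval_iterate_derivative {a b : ℝ} (q : ℝ[X]) {p : ℝ[X]} {n : ℕ}
    (ha : (X - C a) ^ n ∣ p) (hb : (X - C b) ^ n ∣ p) :
    ∫ x in a..b, q.eval x * (derivative^[n] p).eval x =
      (-1) ^ n * ∫ x in a..b, (derivative^[n] q).eval x * p.eval x := by
  induction n generalizing p with
  | zero => simp
  | succ n ih =>
    have dvd_derivative {c : ℝ} (hc : (X - C c) ^ (n + 1) ∣ p) : (X - C c) ^ n ∣ derivative p := by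
      simpa using pow_sub_dvd_iterate_derivative_of_pow_dvd 1 hc
    have isRoot {c : ℝ} (hc : (X - C c) ^ (n + 1) ∣ p) : p.IsRoot c :=
      dvd_iff_isRoot.mp ((dvd_pow_self _ n.succ_ne_zero).trans hc)
    rw [Function.iterate_succ_apply, ih (dvd_derivative ha) (dvd_derivative hb),
      integral_eval_mul_eval_derivative _ (isRoot ha) (isRoot hb), Function.iterate_succ_apply',
      pow_succ]
    ring

/-- The polynomial `dⁿ/dXⁿ (wⁿ)` of Rodrigues' formula. For `w = X² - 1` it is `2ⁿ n!` times the
`n`-th Legendre polynomial; the normalising factor is left out. -/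
noncomputable def rodrigues {R : Type*} [Semiring R] (w : R[X]) (n : ℕ) : R[X] :=
  derivative^[n] (w ^ n)

section Rodrigues

lemma natDegree_rodrigues_le {R : Type*} [Semiring R] {w : R[X]} (hw : w.natDegree ≤ 2) (n : ℕ) :
    (rodrigues w n).natDegree ≤ n :=
  calc (rodrigues w n).natDegree
      ≤ (w ^ n).natDegree - n := natDegree_iterate_derivative _ _
    _ ≤ n * 2 - n := Nat.sub_le_sub_right (natDegree_pow_le_of_le n hw) n
    _ = n := by lia

lemma rodrigues_ne_zero {R : Type*} [Semiring R] [NoZeroDivisors R] [IsAddTorsionFree R]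
    {w : R[X]} (hdeg : 0 < w.natDegree) (n : ℕ) : rodrigues w n ≠ 0 := by
  have hw : w ≠ 0 := ne_zero_of_natDegree_gt hdeg
  refine iterate_derivative_ne_zero_of_le_natDegree (pow_ne_zero n hw) ?_
  rw [natDegree_pow]
  exact Nat.le_mul_of_pos_right n hdeg

variable {a b : ℝ} {w : ℝ[X]}

lemma integral_eval_mul_eval_rodrigues_of_natDegree_lt (ha : w.IsRoot a) (hb : w.IsRoot b)
    {q : ℝ[X]} {n : ℕ} (hq : q.natDegree < n) :
    ∫ x in a..b, q.eval x * (rodrigues w n).eval x = 0 := by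
  have pow_dvd {c : ℝ} (hc : w.IsRoot c) : (X - C c) ^ n ∣ w ^ n :=
    pow_dvd_pow_of_dvd (dvd_iff_isRoot.mpr hc) n
  rw [rodrigues, integral_eval_mul_eval_iterate_derivative q (pow_dvd ha) (pow_dvd hb),
    iterate_derivative_eq_zero hq]
  simp

lemma integral_rodrigues_mul_rodrigues_of_ne (hw : w.natDegree ≤ 2) (ha : w.IsRoot a)
    (hb : w.IsRoot b) {m n : ℕ} (hmn : m ≠ n) :
    ∫ x in a..b, (rodrigues w m).eval x * (rodrigues w n).eval x = 0 := by
  wlog hlt : m < n generalizing m n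
  · simp_rw [mul_comm ((rodrigues w m).eval _)]
    exact this hmn.symm (by lia)
  · exact integral_eval_mul_eval_rodrigues_of_natDegree_lt ha hb
      ((natDegree_rodrigues_le hw m).trans_lt hlt)

end Rodrigues

lemma jacobiP_zero_eq_rodrigues (n : ℕ) (x : ℝ) :
    jacobiP 0 n x = 1 / (2 ^ n * (n.factorial : ℝ)) * (rodrigues (X ^ 2 - 1) n).eval x := by
  have hderiv := congrFun (iteratedDeriv_eval ((X ^ 2 - 1 : ℝ[X]) ^ n) n) x
  simp only [eval_pow, eval_sub, eval_X, eval_one] at hderiv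
  simp only [jacobiP, Real.rpow_zero, one_mul, mul_one, rodrigues, hderiv]

lemma continuous_jacobiP_zero (n : ℕ) : Continuous (jacobiP 0 n) := by
  rw [funext (jacobiP_zero_eq_rodrigues n)]
  fun_prop

lemma deriv_jacobiPhat_zero_succ (n : ℕ) (x : ℝ) :
    deriv (jacobiPhat 0 (n + 1)) x = jacobiP 0 n x :=
  (continuous_jacobiP_zero n).deriv_integral _ (-1) x

lemma dot2_bottom_normal (v : ℝ × ℝ) : dot2 v (0, -1) = -v.2 := by
  simp [dot2]

lemma normalTrace_phiEdge_zero (x : ℝ) : dot2 (phiEdge 0 (x, 0)) (0, -1) = -(1 / 2) := by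
  have deriv_lam1 : deriv (fun t ↦ lam1 (t, 0)) x = -1 / 2 :=
    ((((hasDerivAt_id x).const_sub 1).sub_const 0).div_const 2).deriv
  have deriv_lam2 : deriv (fun t ↦ lam2 (t, 0)) x = 1 / 2 :=
    ((((hasDerivAt_id x).const_add 1).sub_const 0).div_const 2).deriv
  simp only [dot2_bottom_normal, phiEdge, curl2, Prod.snd_sub, Prod.smul_snd, smul_eq_mul,
    deriv_lam1, deriv_lam2]
  simp only [lam1, lam2]
  ring

lemma normalTrace_phiEdge_succ (i : ℕ) (x : ℝ) :
    dot2 (phiEdge (i + 1) (x, 0)) (0, -1) = jacobiP 0 (i + 1) x := by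
  simp only [dot2_bottom_normal, phiEdge, curl2, sub_zero, div_one, one_pow, mul_one, neg_neg]
  exact deriv_jacobiPhat_zero_succ (i + 1) x

lemma exists_normalTrace_phiEdge_eq_mul_rodrigues (i : ℕ) : ∃ a : ℝ, a ≠ 0 ∧ ∀ x : ℝ,
    dot2 (phiEdge i (x, 0)) (0, -1) = a * (rodrigues (X ^ 2 - 1) i).eval x := by
  cases i with
  | zero => exact ⟨-(1 / 2), by norm_num, fun x ↦ by simp [normalTrace_phiEdge_zero, rodrigues]⟩
  | succ i =>
    exact ⟨1 / (2 ^ (i + 1) * ((i + 1).factorial : ℝ)), by positivity,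
      fun x ↦ by rw [normalTrace_phiEdge_succ, jacobiP_zero_eq_rodrigues]⟩

/-- The normal traces of the edge basis functions on the bottom edge of the
reference triangle (with outer unit normal `n = (0,-1)`) form an `L²`-orthogonal family. -/
theorem edge_normal_traces_orthogonal :
    ∃ c : ℕ → ℝ, (∀ i, 0 < c i) ∧ ∀ i j : ℕ,
      ∫ x in (-1 : ℝ)..1,
          dot2 (phiEdge i (x, 0)) (0, -1) * dot2 (phiEdge j (x, 0)) (0, -1)
        = c i * (if i = j then 1 else 0) := by
  choose a ha htrace using exists_normalTrace_phiEdge_eq_mul_rodrigues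
  have hdeg : (X ^ 2 - 1 : ℝ[X]).natDegree = 2 := by compute_degree!
  refine ⟨fun i ↦ a i * a i * ∫ x in (-1 : ℝ)..1,
      (rodrigues (X ^ 2 - 1) i).eval x * (rodrigues (X ^ 2 - 1) i).eval x,
    fun i ↦ mul_pos (mul_self_pos.mpr (ha i))
      (integral_eval_mul_self_pos (by norm_num) (rodrigues_ne_zero (by lia) i)),
    fun i j ↦ ?_⟩
  simp_rw [htrace, mul_mul_mul_comm (a i), intervalIntegral.integral_const_mul]
  rcases eq_or_ne i j with rfl | hij
  · rw [if_pos rfl, mul_one]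
  · rw [integral_rodrigues_mul_rodrigues_of_ne hdeg.le (by simp) (by simp) hij, if_neg hij,
      mul_zero, mul_zero]
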